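/- arXiv:2203.01999 — 2 statements merged into one kernel-verified Lean document; each statement's English description precedes it below -/
import Mathlib

section
/- Let n, p, m be positive natural numbers, θ ∈ ℝ^p, γ > 0, c₁, c₂, c₃ > 0, and let Γ be a symmetric positive definite real p×p matrix with μ_min, μ_max the smallest and largest eigenvalues of Γ⁻¹; set η₁ := min(c₁, μ_min/2) and η₂ := max(c₂, μ_max/2). Let V : ℝⁿ → ℝ be differentiable with gradient ∇V and satisfy c₁‖x‖² ≤ V(x) ≤ c₂‖x‖² for all x. Let f, Y, g, u, Λ be as follows: f : ℝⁿ → ℝⁿ, Y : ℝⁿ → Matrix (Fin n) (Fin p) ℝ, g : ℝⁿ → Matrix (Fin n) (Fin m) ℝ, u : ℝ → ℝᵐ, and Λ : ℝ → Matrix (Fin p) (Fin p) ℝ with each Λ(t) symmetric positive semidefinite. Suppose x : ℝ → ℝⁿ and θ̂ : ℝ → ℝ^p are differentiable with x'(t) = f(x(t)) + Y(x(t))·θ + g(x(t))·u(t) and θ̂'(t) = Γ·((Y(x(t)))ᵀ·∇V(x(t))) + γ·Γ·Λ(t)·(θ − θ̂(t)) for all t ≥ 0, and that the control satisfies the aCLF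 condition ⟨∇V(x(t)), f(x(t)) + Y(x(t))·θ̂(t) + g(x(t))·u(t)⟩ ≤ −c₃·V(x(t)) for all t ≥ 0. Then for all t ≥ 0: ‖x(t)‖² + ‖θ − θ̂(t)‖² ≤ (η₂/η₁)·(‖x(0)‖² + ‖θ − θ̂(0)‖²). -/
open scoped InnerProductSpace

/-- Transposing a real matrix moves it across the Euclidean inner product. -/
theorem Matrix.inner_toEuclideanLin_transpose {m n : Type*} [Fintype m] [DecidableEq m]
    [Fintype n] [DecidableEq n] (A : Matrix m n ℝ) (v : EuclideanSpace ℝ n)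
    (w : EuclideanSpace ℝ m) :
    ⟪v, toEuclideanLin A.transpose w⟫_ℝ = ⟪toEuclideanLin A v, w⟫_ℝ := by
  rw [← conjTranspose_eq_transpose_of_trivial, toEuclideanLin_conjTranspose_eq_adjoint,
    LinearMap.adjoint_inner_right]

section Rayleigh

variable {n : Type*} [Fintype n] [DecidableEq n] {A : Matrix n n ℝ}

/-- Spectral expansion of the quadratic form of a real symmetric matrix. -/
theorem Matrix.IsHermitian.inner_toEuclideanLin_self_eq_sum (hA : A.IsHermitian)
    (v : EuclideanSpace ℝ n) :
    ⟪v, toEuclideanLin A v⟫_ℝ =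
      ∑ i, hA.eigenvalues i * ⟪hA.eigenvectorBasis i, v⟫_ℝ ^ 2 := by
  rw [← hA.eigenvectorBasis.sum_inner_mul_inner]
  refine Finset.sum_congr rfl fun i _ => ?_
  have heig : toEuclideanLin A (hA.eigenvectorBasis i) =
      hA.eigenvalues i • hA.eigenvectorBasis i := by
    rw [toLpLin_apply, hA.mulVec_eigenvectorBasis]
    rfl
  rw [← isSymmetric_toEuclideanLin_iff.mpr hA, heig, real_inner_smul_left, real_inner_comm]
  ring

/-- The smallest eigenvalue bounds the quadratic form from below. -/
theorem Matrix.IsHermitian.iInf_eigenvalues_mul_norm_sq_le (hA : A.IsHermitian)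
    (v : EuclideanSpace ℝ n) :
    (⨅ i, hA.eigenvalues i) * ‖v‖ ^ 2 ≤ ⟪v, toEuclideanLin A v⟫_ℝ := by
  rw [hA.inner_toEuclideanLin_self_eq_sum, ← hA.eigenvectorBasis.sum_sq_inner_right,
    Finset.mul_sum]
  gcongr with i
  exact ciInf_le (Set.finite_range _).bddBelow i

/-- The largest eigenvalue bounds the quadratic form from above. -/
theorem Matrix.IsHermitian.inner_toEuclideanLin_self_le (hA : A.IsHermitian)
    (v : EuclideanSpace ℝ n) :
    ⟪v, toEuclideanLin A v⟫_ℝ ≤ (⨆ i, hA.eigenvalues i) * ‖v‖ ^ 2 := by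
  rw [hA.inner_toEuclideanLin_self_eq_sum, ← hA.eigenvectorBasis.sum_sq_inner_right,
    Finset.mul_sum]
  gcongr with i
  exact le_ciSup (Set.finite_range _).bddAbove i

/-- The smallest eigenvalue of a positive definite matrix is positive. -/
theorem Matrix.PosDef.iInf_eigenvalues_pos [Nonempty n] (hA : A.PosDef) (hH : A.IsHermitian) :
    0 < ⨅ i, hH.eigenvalues i := by
  obtain ⟨i, hi⟩ := exists_eq_ciInf_of_finite (f := hH.eigenvalues)
  exact hi ▸ hH.posDef_iff_eigenvalues_pos.mp hA i

end Rayleigh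

/-- Derivative of the quadratic form of a symmetric matrix along a curve. -/
theorem HasDerivAt.inner_toEuclideanLin_self {n : Type*} [Fintype n] [DecidableEq n]
    {A : Matrix n n ℝ} (hA : A.IsHermitian) {e : ℝ → EuclideanSpace ℝ n}
    {e' : EuclideanSpace ℝ n} {t : ℝ} (he : HasDerivAt e e' t) :
    HasDerivAt (fun s => ⟪e s, Matrix.toEuclideanLin A (e s)⟫_ℝ)
      (2 * ⟪e t, Matrix.toEuclideanLin A e'⟫_ℝ) t := by
  have hAe : HasDerivAt (fun s => Matrix.toEuclideanLin A (e s))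
      (Matrix.toEuclideanLin A e') t :=
    (Matrix.toEuclideanLin A).toContinuousLinearMap.hasFDerivAt.comp_hasDerivAt t he
  refine (he.inner ℝ hAe).congr_deriv ?_
  rw [← Matrix.isSymmetric_toEuclideanLin_iff.mpr hA e' (e t), real_inner_comm]
  ring

/-- A function on the half-line with nonpositive derivative stays below its initial value. -/
theorem le_initial_of_hasDerivAt_nonpos {W W' : ℝ → ℝ}
    (hW : ∀ t, 0 ≤ t → HasDerivAt W (W' t) t) (hW' : ∀ t, 0 ≤ t → W' t ≤ 0)
    {t : ℝ} (ht : 0 ≤ t) : W t ≤ W 0 := by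
  refine antitoneOn_of_deriv_nonpos (convex_Ici 0)
    (fun s hs => (hW s hs).continuousAt.continuousWithinAt)
    (fun s hs => (hW s (interior_subset hs)).differentiableAt.differentiableWithinAt)
    (fun s hs => ?_) Set.self_mem_Ici ht ht
  rw [(hW s (interior_subset hs)).deriv]
  exact hW' s (interior_subset hs)

/-- Lemma 2 (boundedness): along the uncertain dynamics `ẋ = f(x) + Y(x)θ + g(x)u`
with the concurrent-learning aCLF update law
`θ̂' = Γ Y(x)ᵀ ∇V(x) + γ Γ Λ(t)(θ - θ̂)` and the aCLF decrease condition
`⟪∇V(x), f(x) + Y(x)θ̂ + g(x)u⟫ ≤ -c₃ V(x)`, the composite state `z = (x, θ - θ̂)`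
satisfies `‖z(t)‖² ≤ (η₂/η₁) ‖z(0)‖²` for all `t ≥ 0`. -/
theorem es_aclf_composite_boundedness
    (n p m : ℕ) (hn : 0 < n) (hp : 0 < p) (hm : 0 < m)
    (θ : EuclideanSpace ℝ (Fin p)) (γ : ℝ) (hγ : 0 < γ)
    (c₁ c₂ c₃ : ℝ) (hc₁ : 0 < c₁) (hc₂ : 0 < c₂) (hc₃ : 0 < c₃)
    (Γ : Matrix (Fin p) (Fin p) ℝ) (hΓsymm : Γ.IsSymm) (hΓpd : Γ.PosDef)
    (hinv : (Γ⁻¹).IsHermitian)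
    (μmin μmax η₁ η₂ : ℝ)
    (hμmin : μmin = ⨅ i, hinv.eigenvalues i)
    (hμmax : μmax = ⨆ i, hinv.eigenvalues i)
    (hη₁ : η₁ = min c₁ (μmin / 2))
    (hη₂ : η₂ = max c₂ (μmax / 2))
    (V : EuclideanSpace ℝ (Fin n) → ℝ)
    (gradV : EuclideanSpace ℝ (Fin n) → EuclideanSpace ℝ (Fin n))
    (hV : ∀ y, HasGradientAt V (gradV y) y)
    (hVbound : ∀ x, c₁ * ‖x‖ ^ 2 ≤ V x ∧ V x ≤ c₂ * ‖x‖ ^ 2)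
    (f : EuclideanSpace ℝ (Fin n) → EuclideanSpace ℝ (Fin n))
    (Y : EuclideanSpace ℝ (Fin n) → Matrix (Fin n) (Fin p) ℝ)
    (g : EuclideanSpace ℝ (Fin n) → Matrix (Fin n) (Fin m) ℝ)
    (u : ℝ → EuclideanSpace ℝ (Fin m))
    (Λ : ℝ → Matrix (Fin p) (Fin p) ℝ)
    (hΛsymm : ∀ t, (Λ t).IsSymm)
    (hΛpsd : ∀ t, (Λ t).PosSemidef)
    (x : ℝ → EuclideanSpace ℝ (Fin n))
    (θhat : ℝ → EuclideanSpace ℝ (Fin p))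
    (hx : ∀ t, 0 ≤ t → HasDerivAt x
      (f (x t) + Matrix.toEuclideanLin (Y (x t)) θ +
        Matrix.toEuclideanLin (g (x t)) (u t)) t)
    (hθhat : ∀ t, 0 ≤ t → HasDerivAt θhat
      (Matrix.toEuclideanLin Γ (Matrix.toEuclideanLin (Y (x t)).transpose (gradV (x t))) +
        γ • Matrix.toEuclideanLin Γ (Matrix.toEuclideanLin (Λ t) (θ - θhat t))) t)
    (hclf : ∀ t, 0 ≤ t →
      ⟪gradV (x t), f (x t) + Matrix.toEuclideanLin (Y (x t)) (θhat t) +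
          Matrix.toEuclideanLin (g (x t)) (u t)⟫_ℝ ≤ -c₃ * V (x t)) :
    ∀ t, 0 ≤ t →
      ‖x t‖ ^ 2 + ‖θ - θhat t‖ ^ 2 ≤
        (η₂ / η₁) * (‖x 0‖ ^ 2 + ‖θ - θhat 0‖ ^ 2) := by
  intro t ht
  have : Nonempty (Fin p) := ⟨⟨0, hp⟩⟩
  have hcancel : ∀ v : EuclideanSpace ℝ (Fin p),
      Matrix.toEuclideanLin Γ⁻¹ (Matrix.toEuclideanLin Γ v) = v := fun v => by
    simp [Matrix.toLpLin_apply, Matrix.mulVec_mulVec,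
      Matrix.nonsing_inv_mul Γ ((Matrix.isUnit_iff_isUnit_det Γ).mp hΓpd.isUnit)]
  have hVx : ∀ s, 0 ≤ s → HasDerivAt (fun r => V (x r))
      ⟪gradV (x s), f (x s) + Matrix.toEuclideanLin (Y (x s)) θ +
        Matrix.toEuclideanLin (g (x s)) (u s)⟫_ℝ s := fun s hs => by
    simpa using! (hV (x s)).hasFDerivAt.comp_hasDerivAt s (hx s hs)
  -- The composite Lyapunov function is nonincreasing along trajectories.
  have hdecr := le_initial_of_hasDerivAt_nonpos
    (fun s hs => (hVx s hs).add
      ((((hθhat s hs).const_sub θ).inner_toEuclideanLin_self hinv).const_mul (1 / 2)))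
    (fun s hs => by
      have hΛ : 0 ≤ ⟪θ - θhat s, Matrix.toEuclideanLin (Λ s) (θ - θhat s)⟫_ℝ :=
        (Matrix.isPositive_toEuclideanLin_iff.mpr (hΛpsd s)).inner_nonneg_right _
      have hVnonneg : 0 ≤ V (x s) := le_trans (by positivity) (hVbound (x s)).1
      have hclf_s := hclf s hs
      have hγΛ := mul_nonneg hγ.le hΛ
      have hcV := mul_nonneg hc₃.le hVnonneg
      simp only [map_neg, map_add, map_smul, hcancel, inner_neg_right, inner_add_right,
        real_inner_smul_right, Matrix.inner_toEuclideanLin_transpose]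
      rw [real_inner_comm (gradV (x s))]
      rw [map_sub, inner_sub_right]
      rw [inner_add_right, inner_add_right] at hclf_s
      linarith) ht
  have hμ : 0 < μmin := hμmin ▸ hΓpd.inv.iInf_eigenvalues_pos hinv
  have hη₁pos : 0 < η₁ := hη₁ ▸ lt_min hc₁ (half_pos hμ)
  have hlower := hinv.iInf_eigenvalues_mul_norm_sq_le (θ - θhat t)
  have hupper := hinv.inner_toEuclideanLin_self_le (θ - θhat 0)
  rw [← hμmin] at hlower
  rw [← hμmax] at hupper
  have h₁c : η₁ ≤ c₁ := hη₁ ▸ min_le_left _ _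
  have h₁μ : η₁ ≤ μmin / 2 := hη₁ ▸ min_le_right _ _
  have h₂c : c₂ ≤ η₂ := hη₂ ▸ le_max_left _ _
  have h₂μ : μmax / 2 ≤ η₂ := hη₂ ▸ le_max_right _ _
  rw [div_mul_eq_mul_div, le_div_iff₀ hη₁pos]
  have hxt := mul_le_mul_of_nonneg_right h₁c (sq_nonneg ‖x t‖)
  have het := mul_le_mul_of_nonneg_right h₁μ (sq_nonneg ‖θ - θhat t‖)
  have hx0 := mul_le_mul_of_nonneg_right h₂c (sq_nonneg ‖x 0‖)
  have he0 := mul_le_mul_of_nonneg_right h₂μ (sq_nonneg ‖θ - θhat 0‖)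
  have hVt := (hVbound (x t)).1
  have hV0 := (hVbound (x 0)).2
  simp only [Pi.add_apply] at hdecr
  linarith
end

section
/- Under the hypotheses of the previous statement (uncertain dynamics x'(t) = f(x(t)) + Y(x(t))·θ + g(x(t))·u(t); update law θ̂'(t) = Γ·((Y(x(t)))ᵀ·∇V(x(t))) + γ·Γ·Λ(t)·(θ − θ̂(t)) with Γ symmetric positive definite, γ > 0, and each Λ(t) symmetric positive semidefinite; V differentiable with c₁‖x‖² ≤ V(x) ≤ c₂‖x‖²; and aCLF condition ⟨∇V(x(t)), f(x(t)) + Y(x(t))·θ̂(t) + g(x(t))·u(t)⟩ ≤ −c₃·V(x(t)) for all t ≥ 0 with c₃ > 0), assume additionally that the function t ↦ V(x(t)) is uniformly continuous on [0, ∞). Then V(x(t)) → 0 as t → ∞, and consequently x(t) → 0 as t → ∞. -/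
open Filter
open scoped InnerProductSpace

/-- A Barbalat-type lemma: if a nonnegative function `W` decreases on `[0, ∞)` at rate at least
`c * v` with `v` nonnegative and uniformly continuous, then `v` tends to zero. -/
theorem tendsto_zero_of_hasDerivAt_le_neg_mul {W W' v : ℝ → ℝ} {c : ℝ} (hc : 0 < c)
    (hW : ∀ t, 0 ≤ t → HasDerivAt W (W' t) t) (hW' : ∀ t, 0 ≤ t → W' t ≤ -c * v t)
    (hWnonneg : ∀ t, 0 ≤ W t) (hv : ∀ t, 0 ≤ v t)
    (hunif : UniformContinuousOn v (Set.Ici 0)) : Tendsto v atTop (nhds 0) := by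
  have hanti : AntitoneOn W (Set.Ici 0) := by
    refine antitoneOn_of_hasDerivWithinAt_nonpos (f' := W') (convex_Ici 0)
      (fun t ht => (hW t ht).continuousAt.continuousWithinAt) (fun t ht => ?_) (fun t ht => ?_)
    · exact (hW t (interior_subset ht)).hasDerivWithinAt
    · have ht' : 0 ≤ t := interior_subset ht
      nlinarith [hW' t ht', mul_nonneg hc.le (hv t)]
  have hanti' : Antitone fun t => W (max t 0) := fun a b hab =>
    hanti (le_max_right a 0) (le_max_right b 0) (max_le_max_right 0 hab)
  have hlim := tendsto_atTop_ciInf hanti' ⟨0, by rintro _ ⟨t, rfl⟩; exact hWnonneg _⟩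
  rw [Metric.tendsto_atTop]
  intro ε hε
  obtain ⟨δ, hδ, hδv⟩ := Metric.uniformContinuousOn_iff.1 hunif (ε / 2) (half_pos hε)
  set d := δ / 2 with hd
  have hdpos : 0 < d := half_pos hδ
  have hdiff := hlim.sub (hlim.comp (tendsto_atTop_add_const_right atTop d tendsto_id))
  rw [sub_self] at hdiff
  have hpos : 0 < c * (ε / 2) * d := by positivity
  obtain ⟨N, hN⟩ := eventually_atTop.1 (hdiff.eventually (gt_mem_nhds hpos))
  refine ⟨max N 0, fun t ht => ?_⟩
  have ht0 : 0 ≤ t := (le_max_right _ _).trans ht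
  have hsmall := hN t ((le_max_left _ _).trans ht)
  simp only [Function.comp, id, max_eq_left ht0, max_eq_left (add_nonneg ht0 hdpos.le)] at hsmall
  rw [Real.dist_eq, sub_zero, abs_of_nonneg (hv t)]
  by_contra! hεv
  have hmem : ∀ s ∈ interior (Set.Icc t (t + d)), s ∈ Set.Icc t (t + d) :=
    fun s hs => interior_subset hs
  have hdrop := (convex_Icc t (t + d)).image_sub_le_mul_sub_of_deriv_le (f := W)
    (C := -(c * (ε / 2)))
    (fun s hs => (hW s (ht0.trans hs.1)).continuousAt.continuousWithinAt)
    (fun s hs => (hW s (ht0.trans (hmem s hs).1)).differentiableAt.differentiableWithinAt)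
    (fun s hs => by
      obtain ⟨hts, hsd⟩ := hmem s hs
      have hs0 := ht0.trans hts
      rw [(hW s hs0).deriv]
      have hclose := hδv s hs0 t ht0 (by
        rw [Real.dist_eq, abs_of_nonneg (sub_nonneg.2 hts)]; linarith)
      rw [Real.dist_eq, abs_lt] at hclose
      have hvs : ε / 2 ≤ v s := by linarith [hclose.1]
      linarith [hW' s hs0, mul_le_mul_of_nonneg_left hvs hc.le])
    t ⟨le_rfl, by linarith⟩ (t + d) ⟨by linarith, le_rfl⟩ (by linarith)
  linarith

theorem inner_toEuclideanLin_left {k l : ℕ} (A : Matrix (Fin k) (Fin l) ℝ)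
    (y : EuclideanSpace ℝ (Fin l)) (z : EuclideanSpace ℝ (Fin k)) :
    ⟪Matrix.toEuclideanLin A y, z⟫_ℝ = ⟪y, Matrix.toEuclideanLin A.transpose z⟫_ℝ := by
  rw [← Matrix.conjTranspose_eq_transpose_of_trivial,
    Matrix.toEuclideanLin_conjTranspose_eq_adjoint, LinearMap.adjoint_inner_right]

theorem inner_toEuclideanLin_self_nonneg {k : ℕ} {A : Matrix (Fin k) (Fin k) ℝ}
    (hA : A.PosSemidef) (z : EuclideanSpace ℝ (Fin k)) :
    0 ≤ ⟪z, Matrix.toEuclideanLin A z⟫_ℝ := by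
  have h := hA.dotProduct_mulVec_nonneg z.ofLp
  simpa [Matrix.toLpLin_apply, EuclideanSpace.inner_eq_star_dotProduct,
    dotProduct_comm] using h

theorem toEuclideanLin_inv_apply_self {k : ℕ} {A : Matrix (Fin k) (Fin k) ℝ}
    (hA : A.PosDef) (z : EuclideanSpace ℝ (Fin k)) :
    Matrix.toEuclideanLin A⁻¹ (Matrix.toEuclideanLin A z) = z := by
  have hdet : IsUnit A.det := (Matrix.isUnit_iff_isUnit_det A).1 hA.isUnit
  simp [Matrix.toLpLin_apply, Matrix.mulVec_mulVec, Matrix.nonsing_inv_mul _ hdet]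

/-- The derivative of the quadratic form of a symmetric matrix along a curve. -/
theorem hasDerivAt_inner_toEuclideanLin_self {k : ℕ} {A : Matrix (Fin k) (Fin k) ℝ}
    (hA : A.IsSymm) {e : ℝ → EuclideanSpace ℝ (Fin k)} {e' : EuclideanSpace ℝ (Fin k)} {t : ℝ}
    (he : HasDerivAt e e' t) :
    HasDerivAt (fun s => ⟪e s, Matrix.toEuclideanLin A (e s)⟫_ℝ)
      (2 * ⟪e t, Matrix.toEuclideanLin A e'⟫_ℝ) t := by
  have hAe : HasDerivAt (fun s => Matrix.toEuclideanLin A (e s)) (Matrix.toEuclideanLin A e') t :=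
    (LinearMap.toContinuousLinearMap (Matrix.toEuclideanLin A)).hasFDerivAt.comp_hasDerivAt t he
  refine (he.inner ℝ hAe).congr_deriv ?_
  have hsymm := inner_toEuclideanLin_left A (e t) e'
  rw [hA.eq] at hsymm
  rw [real_inner_comm (Matrix.toEuclideanLin A (e t)) e', hsymm]
  ring

/-- Lemma 2 (asymptotic convergence, LaSalle–Yoshizawa): under the ES-aCLF hypotheses
and uniform continuity of `t ↦ V(x(t))` on `[0, ∞)`, one has `V(x(t)) → 0` and
consequently `x(t) → 0` as `t → ∞`. -/
theorem es_aclf_asymptotic_convergence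
    (n p m : ℕ) (hn : 0 < n) (hp : 0 < p) (hm : 0 < m)
    (θ : EuclideanSpace ℝ (Fin p)) (γ : ℝ) (hγ : 0 < γ)
    (c₁ c₂ c₃ : ℝ) (hc₁ : 0 < c₁) (hc₂ : 0 < c₂) (hc₃ : 0 < c₃)
    (Γ : Matrix (Fin p) (Fin p) ℝ) (hΓsymm : Γ.IsSymm) (hΓpd : Γ.PosDef)
    (V : EuclideanSpace ℝ (Fin n) → ℝ)
    (gradV : EuclideanSpace ℝ (Fin n) → EuclideanSpace ℝ (Fin n))
    (hV : ∀ y, HasGradientAt V (gradV y) y)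
    (hVbound : ∀ x, c₁ * ‖x‖ ^ 2 ≤ V x ∧ V x ≤ c₂ * ‖x‖ ^ 2)
    (f : EuclideanSpace ℝ (Fin n) → EuclideanSpace ℝ (Fin n))
    (Y : EuclideanSpace ℝ (Fin n) → Matrix (Fin n) (Fin p) ℝ)
    (g : EuclideanSpace ℝ (Fin n) → Matrix (Fin n) (Fin m) ℝ)
    (u : ℝ → EuclideanSpace ℝ (Fin m))
    (Λ : ℝ → Matrix (Fin p) (Fin p) ℝ)
    (hΛsymm : ∀ t, (Λ t).IsSymm)
    (hΛpsd : ∀ t, (Λ t).PosSemidef)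
    (x : ℝ → EuclideanSpace ℝ (Fin n))
    (θhat : ℝ → EuclideanSpace ℝ (Fin p))
    (hx : ∀ t, 0 ≤ t → HasDerivAt x
      (f (x t) + Matrix.toEuclideanLin (Y (x t)) θ +
        Matrix.toEuclideanLin (g (x t)) (u t)) t)
    (hθhat : ∀ t, 0 ≤ t → HasDerivAt θhat
      (Matrix.toEuclideanLin Γ (Matrix.toEuclideanLin (Y (x t)).transpose (gradV (x t))) +
        γ • Matrix.toEuclideanLin Γ (Matrix.toEuclideanLin (Λ t) (θ - θhat t))) t)
    (hclf : ∀ t, 0 ≤ t →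
      ⟪gradV (x t), f (x t) + Matrix.toEuclideanLin (Y (x t)) (θhat t) +
          Matrix.toEuclideanLin (g (x t)) (u t)⟫_ℝ ≤ -c₃ * V (x t))
    (hVunif : UniformContinuousOn (fun t => V (x t)) (Set.Ici (0 : ℝ))) :
    Tendsto (fun t => V (x t)) atTop (nhds 0) ∧
      Tendsto x atTop (nhds 0) := by
  have hVnonneg : ∀ y, 0 ≤ V y := fun y => (by positivity : 0 ≤ c₁ * ‖y‖ ^ 2).trans (hVbound y).1
  have hΓinv : Γ⁻¹.IsSymm := by
    rw [Matrix.IsSymm, Matrix.transpose_nonsing_inv, hΓsymm.eq]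
  have hVt : Tendsto (fun t => V (x t)) atTop (nhds 0) := by
    refine tendsto_zero_of_hasDerivAt_le_neg_mul
      (W := fun t => V (x t) +
        1 / 2 * ⟪θ - θhat t, Matrix.toEuclideanLin Γ⁻¹ (θ - θhat t)⟫_ℝ) hc₃
      (fun t ht => ((hV (x t)).hasFDerivAt.comp_hasDerivAt t (hx t ht)).add
        ((hasDerivAt_inner_toEuclideanLin_self hΓinv
          ((hθhat t ht).const_sub θ)).const_mul (1 / 2)))
      (fun t ht => ?_) (fun t => ?_) (fun t => hVnonneg _) hVunif
    · have hadj := inner_toEuclideanLin_left (Y (x t)) (θ - θhat t) (gradV (x t))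
      rw [real_inner_comm, map_sub, inner_sub_right] at hadj
      have hΛ := mul_nonneg hγ.le (inner_toEuclideanLin_self_nonneg (hΛpsd t) (θ - θhat t))
      have hdecay := hclf t ht
      simp only [InnerProductSpace.toDual_apply_apply, map_neg, map_add, map_smul,
        toEuclideanLin_inv_apply_self hΓpd, inner_neg_right, inner_add_right,
        real_inner_smul_right] at hdecay ⊢
      linarith
    · have hquad := inner_toEuclideanLin_self_nonneg hΓpd.inv.posSemidef (θ - θhat t)
      have hVx := hVnonneg (x t)
      positivity
  refine ⟨hVt, ?_⟩
  have hsq : Tendsto (fun t => ‖x t‖ ^ 2) atTop (nhds 0) := by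
    refine squeeze_zero (fun t => by positivity) (fun t => ?_)
      (by simpa using hVt.div_const c₁)
    rw [le_div_iff₀ hc₁, mul_comm]
    exact (hVbound (x t)).1
  rw [tendsto_zero_iff_norm_tendsto_zero]
  simpa [Real.sqrt_sq] using hsq.sqrt
end
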